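/- If the concave closure V̂ has bounded steepness at μ₀ with respect to the Kantorovich–Rubinstein distance d, then the persuasion problem is regular, i.e. V̂ is superdifferentiable at μ₀. -/

import Mathlib

open MeasureTheory

/-- Convex combination `t μ + (1 - t) η` of two probability measures. -/
noncomputable def mix {Ω : Type*} [MeasurableSpace Ω] (t : NNReal) (ht : t ≤ 1)
    (μ η : ProbabilityMeasure Ω) : ProbabilityMeasure Ω :=
  ⟨t • (μ : Measure Ω) + (1 - t) • (η : Measure Ω), by
    constructor
    simp only [Measure.coe_add, Pi.add_apply, Measure.smul_apply, smul_eq_mul,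
      measure_univ, mul_one, ENNReal.smul_def]
    rw [← ENNReal.coe_add, add_tsub_cancel_of_le ht, ENNReal.coe_one]⟩

/-- A function `H : Δ(Ω) → ℝ` is affine if it respects convex combinations. -/
def IsAffine {Ω : Type*} [MeasurableSpace Ω] (H : ProbabilityMeasure Ω → ℝ) : Prop :=
  ∀ (μ η : ProbabilityMeasure Ω) (t : NNReal) (ht : t ≤ 1),
    H (mix t ht μ η) = (t : ℝ) * H μ + (1 - (t : ℝ)) * H η

/-- The concave closure `V̂(μ) = inf {H(μ) : H affine continuous, H ≥ V}`. -/
noncomputable def concaveClosure {Ω : Type*} [MeasurableSpace Ω] [TopologicalSpace Ω]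
    [OpensMeasurableSpace Ω] (V : ProbabilityMeasure Ω → ℝ) (μ : ProbabilityMeasure Ω) : ℝ :=
  sInf {r : ℝ | ∃ H : ProbabilityMeasure Ω → ℝ,
    Continuous H ∧ IsAffine H ∧ (∀ μ', V μ' ≤ H μ') ∧ r = H μ}

/-- The persuasion problem is regular if the concave closure `V̂` is superdifferentiable at
`μ₀`. -/
def RegularPersuasion {Ω : Type*} [MeasurableSpace Ω] [TopologicalSpace Ω]
    [OpensMeasurableSpace Ω] (V : ProbabilityMeasure Ω → ℝ) (μ₀ : ProbabilityMeasure Ω) : Prop :=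
  ∃ Vbar : ProbabilityMeasure Ω → ℝ, Continuous Vbar ∧ IsAffine Vbar ∧
    Vbar μ₀ = concaveClosure V μ₀ ∧ ∀ μ, concaveClosure V μ ≤ Vbar μ

/-- The Kantorovich–Rubinstein distance between two (finite) measures:
`d(μ, η) = sup {∫ f dμ − ∫ f dη : f 1-Lipschitz, sup |f| ≤ 1}`. -/
noncomputable def krDist {Ω : Type*} [MeasurableSpace Ω] [PseudoMetricSpace Ω]
    (μ η : Measure Ω) : ℝ :=
  sSup {r : ℝ | ∃ f : Ω → ℝ, LipschitzWith 1 f ∧ (∀ ω, |f ω| ≤ 1) ∧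
    r = ∫ ω, f ω ∂μ - ∫ ω, f ω ∂η}


open scoped BoundedContinuousFunction in
theorem aux_isAffine_integral {Ω : Type*} [MetricSpace Ω] [CompactSpace Ω] [MeasurableSpace Ω]
    [BorelSpace Ω] (f : Ω →ᵇ ℝ) : IsAffine (fun μ : ProbabilityMeasure Ω => ∫ ω, f ω ∂(μ : Measure Ω)) := by
  intro μ η t ht
  have h1 : Integrable f (t • (μ : Measure Ω)) := f.integrable _
  have h2 : Integrable f ((1 - t) • (η : Measure Ω)) := f.integrable _
  change ∫ ω, f ω ∂(t • (μ : Measure Ω) + (1 - t) • (η : Measure Ω)) = _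
  rw [integral_add_measure h1 h2, integral_smul_nnreal_measure, integral_smul_nnreal_measure]
  simp [NNReal.smul_def, NNReal.coe_sub ht]

theorem aux_finite_mix {Ω ι : Type*} [MeasurableSpace Ω] (m : ι → ProbabilityMeasure Ω)
    (s : Finset ι) : ∀ (w : ι → ℝ), (∀ i ∈ s, 0 ≤ w i) → ∑ i ∈ s, w i = 1 →
    ∃ ν : ProbabilityMeasure Ω, ∀ H : ProbabilityMeasure Ω → ℝ, IsAffine H →
      H ν = ∑ i ∈ s, w i * H (m i) := by
  classical
  induction s using Finset.induction_on with
  | empty => intro w _ h; simp at h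
  | insert a s ha ih =>
    intro w hw hsum
    rw [Finset.sum_insert ha] at hsum
    have hwa : 0 ≤ w a := hw a (Finset.mem_insert_self a s)
    have hws : ∀ i ∈ s, 0 ≤ w i := fun i hi => hw i (Finset.mem_insert_of_mem hi)
    have hs0 : 0 ≤ ∑ i ∈ s, w i := Finset.sum_nonneg hws
    rcases hs0.eq_or_lt with h0 | hpos
    · refine ⟨m a, fun H _ => ?_⟩
      have hz := (Finset.sum_eq_zero_iff_of_nonneg hws).1 h0.symm
      rw [Finset.sum_insert ha, Finset.sum_eq_zero (fun i hi => by rw [hz i hi, zero_mul])]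
      have : w a = 1 := by linarith
      rw [this]; ring
    · obtain ⟨ν, hν⟩ := ih (fun i => w i / ∑ i ∈ s, w i)
        (fun i hi => div_nonneg (hws i hi) hs0)
        (by rw [← Finset.sum_div, div_self hpos.ne'])
      obtain ⟨t, htw⟩ : ∃ t : NNReal, (t : ℝ) = w a := ⟨(w a).toNNReal, Real.coe_toNNReal _ hwa⟩
      have hle : t ≤ 1 := by
        rw [← NNReal.coe_le_coe, htw, NNReal.coe_one]; linarith
      refine ⟨mix t hle (m a) ν, fun H hH => ?_⟩
      rw [hH, hν H hH, Finset.sum_insert ha, htw]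
      have : 1 - w a = ∑ i ∈ s, w i := by linarith
      rw [this, Finset.mul_sum]
      congr 1
      refine Finset.sum_congr rfl fun i _ => ?_
      field_simp

open scoped BoundedContinuousFunction in
/-- The dual ball: `K`-Lipschitz functions bounded by `K`. -/
def auxBall (Ω : Type*) [MetricSpace Ω] (K : NNReal) : Set (Ω →ᵇ ℝ) :=
  {f | LipschitzWith K f ∧ ∀ ω, |f ω| ≤ K}

theorem auxBall_compact (Ω : Type*) [MetricSpace Ω] [CompactSpace Ω] (K : NNReal) :
    IsCompact (auxBall Ω K) := by
  refine BoundedContinuousFunction.arzela_ascoli₂ (Metric.closedBall (0 : ℝ) K)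
    (isCompact_closedBall _ _) _ ?_ ?_ ?_
  · have : auxBall Ω K = (⋂ x, ⋂ y, {f | dist (f x) (f y) ≤ K * dist x y}) ∩
        ⋂ x, {f | |f x| ≤ (K : ℝ)} := by
      ext f
      simp [auxBall, lipschitzWith_iff_dist_le_mul]
    rw [this]
    have hc : ∀ x : Ω, Continuous fun f : BoundedContinuousFunction Ω ℝ => f x :=
      fun x => continuous_eval_const x
    refine IsClosed.inter (isClosed_iInter fun x => isClosed_iInter fun y =>
      isClosed_le ((hc x).dist (hc y)) continuous_const)
      (isClosed_iInter fun x => isClosed_le (hc x).abs continuous_const)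
  · intro f x hf
    simpa using hf.2 x
  · exact (LipschitzWith.uniformEquicontinuous _ K (fun f : auxBall Ω K => f.2.1)).equicontinuous

theorem auxBall_convex (Ω : Type*) [MetricSpace Ω] (K : NNReal) :
    Convex ℝ (auxBall Ω K) := by
  intro f hf g hg a b ha hb hab
  refine ⟨?_, fun ω => ?_⟩
  · rw [lipschitzWith_iff_dist_le_mul]
    intro x y
    have h1 := hf.1.dist_le_mul x y
    have h2 := hg.1.dist_le_mul x y
    rw [Real.dist_eq] at *
    calc |(a • f + b • g) x - (a • f + b • g) y| = |a * (f x - f y) + b * (g x - g y)| := by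
          congr 1; simp; ring
      _ ≤ |a * (f x - f y)| + |b * (g x - g y)| := abs_add_le _ _
      _ = a * |f x - f y| + b * |g x - g y| := by
          rw [abs_mul, abs_mul, abs_of_nonneg ha, abs_of_nonneg hb]
      _ ≤ a * (K * dist x y) + b * (K * dist x y) := by gcongr
      _ = K * dist x y := by rw [← add_mul, hab, one_mul]
  · calc |(a • f + b • g) ω| = |a * f ω + b * g ω| := by simp
      _ ≤ |a * f ω| + |b * g ω| := abs_add_le _ _
      _ = a * |f ω| + b * |g ω| := by
          rw [abs_mul, abs_mul, abs_of_nonneg ha, abs_of_nonneg hb]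
      _ ≤ a * K + b * K := by
          gcongr
          · exact hf.2 ω
          · exact hg.2 ω
      _ = K := by rw [← add_mul, hab, one_mul]

/-- `f ↦ ∫ f dμ - ∫ f dη` as a linear map. -/
noncomputable def auxPair {Ω : Type*} [MetricSpace Ω] [CompactSpace Ω] [MeasurableSpace Ω]
    [BorelSpace Ω] (μ η : ProbabilityMeasure Ω) : BoundedContinuousFunction Ω ℝ →ₗ[ℝ] ℝ where
  toFun f := ∫ ω, f ω ∂(μ : Measure Ω) - ∫ ω, f ω ∂(η : Measure Ω)
  map_add' f g := by
    simp only [BoundedContinuousFunction.coe_add, Pi.add_apply]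
    rw [integral_add (f.integrable _) (g.integrable _),
      integral_add (f.integrable _) (g.integrable _)]
    ring
  map_smul' c f := by
    simp only [BoundedContinuousFunction.coe_smul, smul_eq_mul, integral_const_mul, RingHom.id_apply]
    ring

theorem auxPair_continuous {Ω : Type*} [MetricSpace Ω] [CompactSpace Ω] [MeasurableSpace Ω]
    [BorelSpace Ω] (μ η : ProbabilityMeasure Ω) : Continuous (auxPair μ η) := by
  refine AddMonoidHomClass.continuous_of_bound (auxPair μ η) 2 fun f => ?_
  have h1 := f.norm_integral_le_norm (μ : Measure Ω)
  have h2 := f.norm_integral_le_norm (η : Measure Ω)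
  calc ‖auxPair μ η f‖ ≤ ‖∫ ω, f ω ∂(μ : Measure Ω)‖ + ‖∫ ω, f ω ∂(η : Measure Ω)‖ :=
        norm_sub_le _ _
    _ ≤ 2 * ‖f‖ := by linarith

/-- The distance, scaled by `K`, is bounded by any upper bound of the pairing on the ball. -/
theorem aux_kr_le {Ω : Type*} [MetricSpace Ω] [CompactSpace Ω] [MeasurableSpace Ω]
    [BorelSpace Ω] (μ η : ProbabilityMeasure Ω) (K : NNReal) (B : ℝ)
    (hB : ∀ f ∈ auxBall Ω K, auxPair μ η f ≤ B) :
    K * krDist (μ : Measure Ω) (η : Measure Ω) ≤ B := by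
  have h0 : 0 ≤ B := by
    have := hB 0 ⟨LipschitzWith.const' (0 : ℝ), by simp⟩
    simpa using this
  rcases eq_or_ne K 0 with hK | hK
  · simpa [hK] using h0
  have hKpos : (0 : ℝ) < K := by positivity
  rw [mul_comm, ← le_div_iff₀ hKpos]
  refine Real.sSup_le ?_ (by positivity)
  rintro r ⟨f, hf, hfb, rfl⟩
  rw [le_div_iff₀ hKpos]
  let g : BoundedContinuousFunction Ω ℝ := BoundedContinuousFunction.mkOfCompact ⟨f, hf.continuous⟩
  have hg := hB ((K : ℝ) • g) ⟨by
      rw [lipschitzWith_iff_dist_le_mul]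
      intro x y
      have := hf.dist_le_mul x y
      rw [Real.dist_eq] at *
      calc |((K : ℝ) • g) x - ((K : ℝ) • g) y| = |K * (f x - f y)| := by
            congr 1; simp [g]; ring
        _ = K * |f x - f y| := by rw [abs_mul, abs_of_pos hKpos]
        _ ≤ K * dist x y := by
            gcongr; simpa using this, fun ω => by
      have := hfb ω
      calc |((K : ℝ) • g) ω| = |K * f ω| := by simp [g]
        _ = K * |f ω| := by rw [abs_mul, abs_of_pos hKpos]
        _ ≤ K := by nlinarith⟩
  rw [map_smul, smul_eq_mul] at hg
  rw [mul_comm]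
  exact hg

theorem aux_kr_nonneg {Ω : Type*} [MetricSpace Ω] [CompactSpace Ω] [MeasurableSpace Ω]
    [BorelSpace Ω] (μ η : ProbabilityMeasure Ω) :
    0 ≤ krDist (μ : Measure Ω) (η : Measure Ω) := by
  refine Real.sSup_nonneg' ⟨0, ⟨0, ?_, by simp, by simp⟩, le_rfl⟩
  exact LipschitzWith.const' (0 : ℝ)

/-- Finite-dimensional separation step. -/
theorem aux_finite {Ω : Type*} [MetricSpace Ω] [CompactSpace Ω] [MeasurableSpace Ω]
    [BorelSpace Ω] (μ₀ : ProbabilityMeasure Ω) (c : ProbabilityMeasure Ω → ℝ) (K : NNReal)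
    (s : Finset (ProbabilityMeasure Ω))
    (hc : ∀ w : s → ℝ, (∀ i, 0 ≤ w i) → ∑ i, w i = 1 → ∀ B : ℝ,
      (∀ f ∈ auxBall Ω K, ∑ i, w i * auxPair i.1 μ₀ f ≤ B) → ∑ i, w i * c i.1 ≤ B) :
    ∃ f ∈ auxBall Ω K, ∀ μ ∈ s, c μ ≤ auxPair μ μ₀ f := by
  classical
  by_contra hcon
  push Not at hcon
  let T : BoundedContinuousFunction Ω ℝ →ₗ[ℝ] (s → ℝ) := LinearMap.pi fun i => auxPair i.1 μ₀
  have hT : Continuous T := continuous_pi fun i => auxPair_continuous i.1 μ₀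
  have hdis : Disjoint (T '' auxBall Ω K) (Set.Ici (fun i : s => c i.1)) := by
    rw [Set.disjoint_left]
    rintro _ ⟨f, hf, rfl⟩ hx
    obtain ⟨μ, hμ, hlt⟩ := hcon f hf
    exact absurd (hx ⟨μ, hμ⟩) (not_le.2 hlt)
  obtain ⟨l, u, v, hlu, huv, hlv⟩ := geometric_hahn_banach_compact_closed
    ((auxBall_convex Ω K).linear_image T) ((auxBall_compact Ω K).image hT)
    (convex_Ici (𝕜 := ℝ) (fun i : s => c i.1)) isClosed_Ici hdis
  let a : s → ℝ := fun i => l (Pi.single i 1)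
  have hl : ∀ x : s → ℝ, l x = ∑ i, a i * x i := by
    intro x
    conv_lhs => rw [pi_eq_sum_univ' x]
    rw [map_sum]
    refine Finset.sum_congr rfl fun i _ => ?_
    rw [map_smul, smul_eq_mul, mul_comm]
  have ha : ∀ i, 0 ≤ a i := by
    intro i
    by_contra hneg
    push Not at hneg
    have key : ∀ t : ℝ, 0 ≤ t → v < l (fun i : s => c i.1) + t * a i := by
      intro t ht
      have := hlv ((fun i : s => c i.1) + t • Pi.single i 1) (by
        intro j
        have : 0 ≤ (t • (Pi.single i (1 : ℝ) : s → ℝ)) j := by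
          by_cases h : j = i
          · subst h; simpa using ht
          · simp [h]
        simpa using this)
      rwa [map_add, map_smul, smul_eq_mul] at this
    have h0 := key 0 le_rfl
    have := key ((l (fun i : s => c i.1) - v) / (-a i)) (by
      apply div_nonneg <;> linarith)
    have h3 : (l (fun i : s => c i.1) - v) / (-a i) * a i = -(l (fun i : s => c i.1) - v) := by
      have : a i ≠ 0 := hneg.ne
      field_simp
    linarith
  have h0mem : (0 : BoundedContinuousFunction Ω ℝ) ∈ auxBall Ω K :=
    ⟨LipschitzWith.const' (0 : ℝ), by simp⟩
  have hu0 : 0 < u := by simpa using hlu _ ⟨0, h0mem, rfl⟩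
  have hv := hlv (fun i : s => c i.1) (Set.mem_Ici.2 le_rfl)
  rw [hl] at hv
  set A := ∑ i, a i with hA
  have hApos : 0 < A := by
    rcases (Finset.sum_nonneg (fun i _ => ha i) : 0 ≤ ∑ i, a i).eq_or_lt with h | h
    · have hz := (Finset.sum_eq_zero_iff_of_nonneg (fun i _ => ha i)).1 h.symm
      rw [Finset.sum_eq_zero (fun i hi => by rw [hz i hi, zero_mul])] at hv
      linarith
    · exact h
  have e : ∀ x : s → ℝ, ∑ i, a i / A * x i = (∑ i, a i * x i) / A := by
    intro x
    rw [Finset.sum_div]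
    exact Finset.sum_congr rfl fun i _ => by ring
  have := hc (fun i => a i / A) (fun i => div_nonneg (ha i) hApos.le)
    (by rw [← Finset.sum_div, div_self hApos.ne']) (u / A) (fun f hf => by
      rw [e]
      have := hlu _ ⟨f, hf, rfl⟩
      rw [hl] at this
      exact div_le_div_of_nonneg_right this.le hApos.le)
  rw [e, div_le_div_iff_of_pos_right hApos] at this
  linarith

/-- Finite Jensen inequality for the concave closure. -/
theorem aux_concave {Ω ι : Type*} [MeasurableSpace Ω] [TopologicalSpace Ω]
    [OpensMeasurableSpace Ω] (V : ProbabilityMeasure Ω → ℝ)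
    (hne : ∃ H : ProbabilityMeasure Ω → ℝ, Continuous H ∧ IsAffine H ∧ ∀ μ', V μ' ≤ H μ')
    (m : ι → ProbabilityMeasure Ω) (s : Finset ι) (w : ι → ℝ) (hw : ∀ i ∈ s, 0 ≤ w i)
    (ν : ProbabilityMeasure Ω)
    (hν : ∀ H : ProbabilityMeasure Ω → ℝ, IsAffine H → H ν = ∑ i ∈ s, w i * H (m i)) :
    ∑ i ∈ s, w i * concaveClosure V (m i) ≤ concaveClosure V ν := by
  obtain ⟨H₀, h1, h2, h3⟩ := hne
  refine le_csInf ⟨_, H₀, h1, h2, h3, rfl⟩ ?_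
  rintro r ⟨H, hc, ha, hV, rfl⟩
  rw [hν H ha]
  refine Finset.sum_le_sum fun i hi => mul_le_mul_of_nonneg_left ?_ (hw i hi)
  refine csInf_le ⟨V (m i), ?_⟩ ⟨H, hc, ha, hV, rfl⟩
  rintro r ⟨H', _, _, hV', rfl⟩
  exact hV' _

/-- **Theorem 4**: if the concave closure `V̂` has bounded steepness at `μ₀` (with respect to
the Kantorovich–Rubinstein distance), then the persuasion problem is regular. -/
theorem regular_of_boundedSteepness
    {Ω : Type*} [MetricSpace Ω] [CompactSpace Ω] [MeasurableSpace Ω] [BorelSpace Ω]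
    (μ₀ : ProbabilityMeasure Ω)
    (hfull : ∀ U : Set Ω, IsOpen U → U.Nonempty → 0 < (μ₀ : Measure Ω) U)
    (V : ProbabilityMeasure Ω → ℝ) (hV : UpperSemicontinuous V)
    (L : ℝ)
    (hsteep : ∀ μ : ProbabilityMeasure Ω,
      concaveClosure V μ - concaveClosure V μ₀
        ≤ L * krDist (μ : Measure Ω) (μ₀ : Measure Ω)) :
    RegularPersuasion V μ₀ := by
  by_cases hne : ∃ H : ProbabilityMeasure Ω → ℝ,
      Continuous H ∧ IsAffine H ∧ ∀ μ', V μ' ≤ H μ'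
  swap
  · have hz : ∀ μ, concaveClosure V μ = 0 := by
      intro μ
      have : {r : ℝ | ∃ H : ProbabilityMeasure Ω → ℝ,
          Continuous H ∧ IsAffine H ∧ (∀ μ', V μ' ≤ H μ') ∧ r = H μ} = ∅ := by
        ext r
        simp only [Set.mem_ofPred_eq, Set.mem_empty_iff_false, iff_false]
        rintro ⟨H, h1, h2, h3, _⟩
        exact hne ⟨H, h1, h2, h3⟩
      rw [concaveClosure, this, Real.sInf_empty]
    exact ⟨fun _ => 0, continuous_const, fun _ _ _ _ => by simp, (hz μ₀).symm,
      fun μ => (hz μ).le⟩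
  let K : NNReal := ‖L‖₊
  let c : ProbabilityMeasure Ω → ℝ := fun μ => concaveClosure V μ - concaveClosure V μ₀
  have hLK : L ≤ (K : ℝ) := by simpa [K] using le_abs_self L
  have hfin : ∀ s : Finset (ProbabilityMeasure Ω),
      ∃ f ∈ auxBall Ω K, ∀ μ ∈ s, c μ ≤ auxPair μ μ₀ f := by
    intro s
    refine aux_finite μ₀ c K s fun w hw hsum B hB => ?_
    obtain ⟨ν, hν⟩ := aux_finite_mix (fun i : s => i.1) Finset.univ w (fun i _ => hw i) hsum
    have hJ := aux_concave V hne (fun i : s => i.1) Finset.univ w (fun i _ => hw i) ν hν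
    have hkr := aux_kr_le ν μ₀ K B (fun f hf => by
      refine le_trans (le_of_eq ?_) (hB f hf)
      change ∫ ω, f ω ∂(ν : Measure Ω) - ∫ ω, f ω ∂(μ₀ : Measure Ω) = ∑ i, w i *
        (∫ ω, f ω ∂((i : ProbabilityMeasure Ω) : Measure Ω) - ∫ ω, f ω ∂(μ₀ : Measure Ω))
      have := hν _ (aux_isAffine_integral f)
      rw [this]
      simp_rw [mul_sub]
      rw [Finset.sum_sub_distrib, ← Finset.sum_mul, hsum, one_mul])
    have hs := hsteep ν
    have hn := mul_le_mul_of_nonneg_right hLK (aux_kr_nonneg ν μ₀)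
    have : ∑ i, w i * c i.1 =
        ∑ i, w i * concaveClosure V (i : ProbabilityMeasure Ω) - concaveClosure V μ₀ := by
      simp only [c]
      simp_rw [mul_sub]
      rw [Finset.sum_sub_distrib, ← Finset.sum_mul, hsum, one_mul]
    rw [this]
    linarith
  have hcl : ∀ μ, IsClosed {f | c μ ≤ auxPair μ μ₀ f} := fun μ =>
    isClosed_le continuous_const (auxPair_continuous μ μ₀)
  obtain ⟨f, hf, hfc⟩ := (auxBall_compact Ω K).inter_iInter_nonempty _ hcl (fun s => by
    obtain ⟨f, hf, h⟩ := hfin s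
    exact ⟨f, hf, by simpa using h⟩)
  have hfc' : ∀ μ, c μ ≤ auxPair μ μ₀ f := by simpa using hfc
  refine ⟨fun μ => ∫ ω, f ω ∂(μ : Measure Ω) +
    (concaveClosure V μ₀ - ∫ ω, f ω ∂(μ₀ : Measure Ω)), ?_, ?_, by ring, fun μ => ?_⟩
  · exact (ProbabilityMeasure.continuous_integral_boundedContinuousFunction f).add
      continuous_const
  · intro μ η t ht
    have := aux_isAffine_integral f μ η t ht
    simp only at this ⊢
    rw [this]
    ring
  · have h := hfc' μ
    change concaveClosure V μ - concaveClosure V μ₀ ≤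
      ∫ ω, f ω ∂(μ : Measure Ω) - ∫ ω, f ω ∂(μ₀ : Measure Ω) at h
    linarith
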